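/- Let L = 2, A ∈ ℝ^{M×N}, b ∈ ℝ^M, and η̃ > 0. Suppose (r,u) follows the weight-normalized gradient flow with learning rates (η_r, η_u) = (η̃, 1), with r(0) = r₀ > 0, u(0) = u₀ > 0 entrywise, ‖u₀‖₂ = 1, and r₀ ≤ min(η̃^{1/2}, ‖A†b‖₂^{1/2}). Assume there exists v > 0 entrywise with Av = 0 and that S₊ = {z ≥ 0 : Az = b} is nonempty. Set x(t) = (r(t)/‖u(t)‖₂) u(t) and x̃(t) = x(t)^{⊙2}. Then the limit x̃_∞ = lim_{t→∞} x̃(t) exists. -/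

import Mathlib

open Filter Topology

noncomputable section

variable {M N : ℕ}

/-- Entrywise (Hadamard) natural power `x^{⊙L}`. -/
def hadPow (x : Fin N → ℝ) (L : ℕ) : Fin N → ℝ := fun n => x n ^ L

/-- Euclidean (ℓ2) norm of a vector. -/
def eucNorm (u : Fin N → ℝ) : ℝ := Real.sqrt (∑ n, u n ^ 2)

/-- The loss `𝓛(x) = (1/(2L)) ‖A x^{⊙L} − b‖₂²`. -/
def loss (A : Matrix (Fin M) (Fin N) ℝ) (b : Fin M → ℝ) (L : ℕ) (x : Fin N → ℝ) : ℝ :=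
  (1 / (2 * (L : ℝ))) * ∑ m, (A.mulVec (hadPow x L) m - b m) ^ 2

/-- The gradient `∇𝓛(x) = [Aᵀ(A x^{⊙L} − b)] ⊙ x^{⊙(L−1)}`. -/
def gradLoss (A : Matrix (Fin M) (Fin N) ℝ) (b : Fin M → ℝ) (L : ℕ) (x : Fin N → ℝ) :
    Fin N → ℝ :=
  fun n => A.transpose.mulVec (A.mulVec (hadPow x L) - b) n * x n ^ (L - 1)

/-- The weight-normalized vector `x = (r/‖u‖₂) u`. -/
def normVec (r : ℝ) (u : Fin N → ℝ) : Fin N → ℝ := (r / eucNorm u) • u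

/-- `∇_r 𝓛̃(r,u) = (uᵀ/‖u‖₂) ∇𝓛((r/‖u‖₂)u)`. -/
def gradR (A : Matrix (Fin M) (Fin N) ℝ) (b : Fin M → ℝ) (L : ℕ) (r : ℝ)
    (u : Fin N → ℝ) : ℝ :=
  ∑ n, (u n / eucNorm u) * gradLoss A b L (normVec r u) n

/-- `∇_u 𝓛̃(r,u) = (r/‖u‖₂)(I − uuᵀ/‖u‖₂²) ∇𝓛((r/‖u‖₂)u)`. -/
def gradU (A : Matrix (Fin M) (Fin N) ℝ) (b : Fin M → ℝ) (L : ℕ) (r : ℝ)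
    (u : Fin N → ℝ) : Fin N → ℝ :=
  fun n => (r / eucNorm u) * (gradLoss A b L (normVec r u) n -
    (∑ k, u k * gradLoss A b L (normVec r u) k) / eucNorm u ^ 2 * u n)

/-- Weight-normalized gradient flow with (possibly time-dependent) learning rates
`(η_r, η_u)`: `∂ₜ r = −η_r ∇_r 𝓛̃(r,u)`, `∂ₜ u = −η_u ∇_u 𝓛̃(r,u)` for `t ≥ 0`. -/
def WNFlow (A : Matrix (Fin M) (Fin N) ℝ) (b : Fin M → ℝ) (L : ℕ)
    (ηr ηu : ℝ → ℝ) (r : ℝ → ℝ) (u : ℝ → Fin N → ℝ) : Prop :=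
  (∀ t, 0 ≤ t → HasDerivAt r (-(ηr t * gradR A b L (r t) (u t))) t) ∧
  (∀ t, 0 ≤ t → ∀ n, HasDerivAt (fun s => u s n) (-(ηu t * gradU A b L (r t) (u t) n)) t)

/-- Plain gradient flow `∂ₜ x = −∇𝓛(x)` for `t ≥ 0`. -/
def GradFlow (A : Matrix (Fin M) (Fin N) ℝ) (b : Fin M → ℝ) (L : ℕ)
    (x : ℝ → Fin N → ℝ) : Prop :=
  ∀ t, 0 ≤ t → ∀ n, HasDerivAt (fun s => x s n) (-gradLoss A b L (x t) n) t

/-- The set of nonnegative solutions `S₊ = {z ≥ 0 : Az = b}`. -/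
def Splus (A : Matrix (Fin M) (Fin N) ℝ) (b : Fin M → ℝ) : Set (Fin N → ℝ) :=
  {z | (∀ n, 0 ≤ z n) ∧ A.mulVec z = b}

/-- Weighted ℓ1-norm `‖z‖_{w,1} = ‖w ⊙ z‖₁`. -/
def wl1 (w z : Fin N → ℝ) : ℝ := ∑ n, |w n * z n|

/-- The Moore–Penrose conditions characterizing the pseudoinverse `A†`. -/
def IsMoorePenrose (A : Matrix (Fin M) (Fin N) ℝ) (Adag : Matrix (Fin N) (Fin M) ℝ) :
    Prop :=
  A * Adag * A = A ∧ Adag * A * Adag = Adag ∧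
    (A * Adag).transpose = A * Adag ∧ (Adag * A).transpose = Adag * A

/-- The potential `F` defining the Bregman divergence. -/
def breF (L : ℕ) (p : Fin N → ℝ) : ℝ :=
  if L = 2 then (1 / 2) * ∑ n, (p n * Real.log (p n) - p n)
  else ((L : ℝ) / (2 * (2 - (L : ℝ)))) * ∑ n, p n ^ ((2 : ℝ) / (L : ℝ))

/-- The gradient of the potential `F`. -/
def breGradF (L : ℕ) (q : Fin N → ℝ) : Fin N → ℝ :=
  fun n => if L = 2 then (1 / 2) * Real.log (q n)
  else (1 / (2 - (L : ℝ))) * q n ^ ((2 : ℝ) / (L : ℝ) - 1)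

/-- Bregman divergence `D_F(p,q) = F(p) − F(q) − ⟨∇F(q), p − q⟩`. -/
def bregman (L : ℕ) (p q : Fin N → ℝ) : ℝ :=
  breF L p - breF L q - ∑ n, breGradF L q n * (p n - q n)

/-!
Put `q = r²` and `p = u^{⊙2} / ‖u‖₂²`, so that `x^{⊙2} = q p`. The flow conserves `‖u‖₂`, so
`(q, p)` solves an autonomous equation on the half-line times the simplex. Every nonnegative
solution `z` of `Az = b` yields a Lyapunov function, a multiple of the cross-entropy `-∑ zₙ log pₙ`
plus a multiple of `(q - ∑ zₙ)²`, which decreases at rate `q ‖A(qp) - b‖₂²`. Hence the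
trajectory is bounded and, by Barbălat's lemma, the dissipation tends to `0`.

If `q → 0`, then `x^{⊙2} → 0`. Otherwise there is a cluster point `(ρ, w)` with `ρ > 0` and
`A(ρw) = b`, and the Lyapunov function of `z = ρw` itself converges to its value at `(ρ, w)`. Its
excess over that value is `ρ KL(w ‖ p)` plus `(q - ρ)²`, up to constants. Relative entropy dominates
the squared Hellinger distance, so `(q, p) → (ρ, w)`, including in coordinates where `w` vanishes.
-/

section Convergence

open Set

theorem exists_tendsto_atTop_of_antitoneOn_Ici {f : ℝ → ℝ} {a c : ℝ}
    (hf : AntitoneOn f (Ici a)) (hc : ∀ t ∈ Ici a, c ≤ f t) : ∃ l, Tendsto f atTop (𝓝 l) := by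
  have hanti : Antitone fun t => f (max t a) := fun s t hst =>
    hf (le_max_right s a) (le_max_right t a) (max_le_max_right a hst)
  have hbdd : BddBelow (range fun t => f (max t a)) :=
    ⟨c, forall_mem_range.2 fun t => hc _ (le_max_right t a)⟩
  refine ⟨_, (tendsto_atTop_ciInf hanti hbdd).congr' ?_⟩
  filter_upwards [eventually_ge_atTop a] with t ht
  rw [max_eq_left ht]

/-- Barbălat's lemma. -/
theorem tendsto_zero_of_uniformContinuousOn_deriv {f f' : ℝ → ℝ} {a l : ℝ}
    (hf : ∀ t ∈ Ici a, HasDerivWithinAt f (f' t) (Ici a) t)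
    (hf' : UniformContinuousOn f' (Ici a)) (hl : Tendsto f atTop (𝓝 l)) :
    Tendsto f' atTop (𝓝 0) := by
  rw [Metric.tendsto_nhds]
  intro ε hε
  obtain ⟨δ, hδ, hclose⟩ := Metric.uniformContinuousOn_iff.1 hf' (ε / 2) (half_pos hε)
  have hslope : Tendsto (fun t => (f (t + δ / 2) - f t) / (δ / 2)) atTop (𝓝 0) := by
    simpa using ((hl.comp (tendsto_atTop_add_const_right _ (δ / 2) tendsto_id)).sub hl).div_const
      (δ / 2)
  filter_upwards [eventually_ge_atTop a, Metric.tendsto_nhds.1 hslope (ε / 2) (half_pos hε)]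
    with t hat hsmall
  obtain ⟨c, hc, hfc⟩ : ∃ c ∈ Ioo t (t + δ / 2), f' c = (f (t + δ / 2) - f t) / (δ / 2) := by
    have hIcc : Icc t (t + δ / 2) ⊆ Ici a := fun x hx => hat.trans hx.1
    obtain ⟨c, hc, hfc⟩ := exists_hasDerivAt_eq_slope f f' (by linarith : t < t + δ / 2)
      (fun x hx => (hf x (hIcc hx)).continuousWithinAt.mono hIcc)
      (fun x hx => (hf x (hat.trans hx.1.le)).hasDerivAt (Ici_mem_nhds (hat.trans_lt hx.1)))
    exact ⟨c, hc, by rw [hfc, add_sub_cancel_left]⟩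
  have hct : dist t c < δ := by
    rw [Real.dist_eq, abs_sub_comm, abs_of_pos (sub_pos.2 hc.1)]
    linarith [hc.2]
  calc dist (f' t) 0 ≤ dist (f' t) (f' c) + dist (f' c) 0 := dist_triangle _ _ _
    _ < ε / 2 + ε / 2 := add_lt_add (hclose t hat c (hat.trans hc.1.le) hct) (hfc ▸ hsmall)
    _ = ε := add_halves ε

theorem tendsto_zero_of_compact_trajectory {E : Type*} [NormedAddCommGroup E] [NormedSpace ℝ E]
    {K : Set E} (hK : IsCompact K) {F : E → E} (hF : ContinuousOn F K) {φ : E → ℝ}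
    (hφ : ContinuousOn φ K) {a l : ℝ} {s : ℝ → E} (hsK : MapsTo s (Ici a) K)
    (hs : ∀ t ∈ Ici a, HasDerivWithinAt s (F (s t)) (Ici a) t) {V : ℝ → ℝ}
    (hV : ∀ t ∈ Ici a, HasDerivWithinAt V (φ (s t)) (Ici a) t) (hl : Tendsto V atTop (𝓝 l)) :
    Tendsto (fun t => φ (s t)) atTop (𝓝 0) := by
  obtain ⟨C, hC⟩ := hK.exists_bound_of_continuousOn hF
  have hLip : LipschitzOnWith C.toNNReal s (Ici a) :=
    (convex_Ici a).lipschitzOnWith_of_nnnorm_hasDerivWithin_le hs fun t ht => by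
      rw [← norm_toNNReal]
      exact Real.toNNReal_le_toNNReal (hC _ (hsK ht))
  exact tendsto_zero_of_uniformContinuousOn_deriv hV
    ((hK.uniformContinuousOn_of_continuous hφ).comp hLip.uniformContinuousOn hsK) hl

theorem ne_zero_of_hasDerivWithinAt_smul {E : Type*} [NormedAddCommGroup E] [NormedSpace ℝ E]
    {k : ℝ → ℝ} {y : ℝ → E} {a : ℝ} (hk : ContinuousOn k (Ici a))
    (hy : ∀ t ∈ Ici a, HasDerivWithinAt y (k t • y t) (Ici a) t) (ha : y a ≠ 0)
    {t : ℝ} (ht : t ∈ Ici a) : y t ≠ 0 := by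
  intro hyt
  obtain ⟨C, hC⟩ := isCompact_Icc.exists_bound_of_continuousOn
    (hk.mono (Icc_subset_Ici_self : Icc a t ⊆ Ici a))
  have hLip : ∀ τ ∈ Ioc a t, LipschitzOnWith C.toNNReal (fun x : E => k τ • x) univ := by
    refine fun τ hτ => (LipschitzWith.of_dist_le_mul fun x x' => ?_).lipschitzOnWith
    rw [dist_smul₀]
    exact mul_le_mul_of_nonneg_right
      ((hC τ (Ioc_subset_Icc_self hτ)).trans (Real.le_coe_toNNReal C)) dist_nonneg
  have hzero : EqOn y (fun _ => 0) (Icc a t) :=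
    ODE_solution_unique_of_mem_Icc_left hLip
      (fun τ hτ => (hy τ hτ.1).continuousWithinAt.mono Icc_subset_Ici_self)
      (fun τ hτ => ((hy τ hτ.1.le).hasDerivAt (Ici_mem_nhds hτ.1)).hasDerivWithinAt)
      (fun _ _ => mem_univ _) continuousOn_const
      (fun τ _ => by simpa only [smul_zero] using hasDerivWithinAt_const τ (Iic τ) (0 : E))
      (fun _ _ => mem_univ _) hyt
  exact ha (hzero (left_mem_Icc.2 ht))

theorem eq_of_mapClusterPt_of_tendsto_comp {X Y Z : Type*} [TopologicalSpace Y]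
    [TopologicalSpace Z] [T2Space Z] {l : Filter X} {f : X → Y} {φ : Y → Z} {y : Y} {z : Z}
    (hy : MapClusterPt y l f) (hφ : ContinuousAt φ y) (hz : Tendsto (fun x => φ (f x)) l (𝓝 z)) :
    φ y = z :=
  eq_of_nhds_neBot ((hy.continuousAt_comp hφ).clusterPt.mono hz)

theorem tendsto_of_sq_sub_le {X : Type*} {l : Filter X} {f g : X → ℝ} {a : ℝ}
    (hfg : ∀ᶠ x in l, (f x - a) ^ 2 ≤ g x) (hg : Tendsto g l (𝓝 0)) : Tendsto f l (𝓝 a) := by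
  have hsq : Tendsto (fun x => (f x - a) ^ 2) l (𝓝 0) :=
    squeeze_zero' (Eventually.of_forall fun x => sq_nonneg _) hfg hg
  refine tendsto_iff_dist_tendsto_zero.2 ?_
  simpa only [Real.sqrt_sq_eq_abs, Real.sqrt_zero, Real.dist_eq] using hsq.sqrt

end Convergence

section RelativeEntropy

theorem sq_sqrt_sub_sqrt_le {w p : ℝ} (hw : 0 ≤ w) (hp : 0 < p) :
    (√w - √p) ^ 2 ≤ w * (Real.log w - Real.log p) + p - w := by
  rcases hw.eq_or_lt with rfl | hw
  · simp [Real.sq_sqrt hp.le]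
  · have hlog : Real.log p / 2 - Real.log w / 2 ≤ √p / √w - 1 := by
      rw [← Real.log_sqrt hp.le, ← Real.log_sqrt hw.le,
        ← Real.log_div (by positivity) (by positivity)]
      exact Real.log_le_sub_one_of_pos (by positivity)
    have hcross : w * (√p / √w) = √w * √p := by
      nth_rw 1 [← Real.mul_self_sqrt hw.le]
      field_simp
    nlinarith [mul_le_mul_of_nonneg_left hlog hw.le, Real.sq_sqrt hw.le, Real.sq_sqrt hp.le]

theorem sum_sq_sqrt_sub_sqrt_le {ι : Type*} [Fintype ι] {w p : ι → ℝ} (hw : w ∈ stdSimplex ℝ ι)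
    (hp : p ∈ stdSimplex ℝ ι) (hpos : ∀ n, 0 < p n) :
    ∑ n, (√(w n) - √(p n)) ^ 2 ≤ ∑ n, w n * (Real.log (w n) - Real.log (p n)) := by
  calc ∑ n, (√(w n) - √(p n)) ^ 2
      ≤ ∑ n, (w n * (Real.log (w n) - Real.log (p n)) + p n - w n) :=
        Finset.sum_le_sum fun n _ => sq_sqrt_sub_sqrt_le (hw.1 n) (hpos n)
    _ = ∑ n, w n * (Real.log (w n) - Real.log (p n)) := by
        rw [Finset.sum_sub_distrib, Finset.sum_add_distrib, hw.2, hp.2, add_sub_cancel_right]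

end RelativeEntropy

section PolarFlow

open Set
open scoped Matrix

variable {ι κ : Type*} [Fintype ι] [Fintype κ]

/-- The gradient `Aᵀ(Az − b)` of the least-squares loss `z ↦ ½‖Az − b‖₂²`. -/
def lsqGrad (A : Matrix κ ι ℝ) (b : κ → ℝ) (z : ι → ℝ) : ι → ℝ := Aᵀ *ᵥ (A *ᵥ z - b)

/-- The squared residual `‖Az − b‖₂²`, the dissipation rate (per unit `q`) of `polarLyapunov`. -/
def sqResidual (A : Matrix κ ι ℝ) (b : κ → ℝ) (z : ι → ℝ) : ℝ := (A *ᵥ z - b) ⬝ᵥ (A *ᵥ z - b)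

/-- The relative growth rate of the coordinate `p n` under `polarField` at the point
`s = (q, p)`. -/
def polarRate (A : Matrix κ ι ℝ) (b : κ → ℝ) (β : ℝ) (n : ι) (s : ℝ × (ι → ℝ)) : ℝ :=
  -(β * s.1 * (lsqGrad A b (s.1 • s.2) n - s.2 ⬝ᵥ lsqGrad A b (s.1 • s.2)))

/-- The vector field of the weight-normalized flow in the coordinates `q = r²` and
`p = u^{⊙2} / ‖u‖₂²`, in which `x^{⊙2} = q p`. The rates `α, β` of `q, p` absorb all constants. -/
def polarField (A : Matrix κ ι ℝ) (b : κ → ℝ) (α β : ℝ) (s : ℝ × (ι → ℝ)) : ℝ × (ι → ℝ) :=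
  (-(α * s.1 * (s.2 ⬝ᵥ lsqGrad A b (s.1 • s.2))),
    fun n => polarRate A b β n s * s.2 n)

/-- A forward trajectory of `polarField`, recording that `q` stays nonnegative and that `p` stays in
the probability simplex. -/
structure IsPolarFlow (A : Matrix κ ι ℝ) (b : κ → ℝ) (α β : ℝ) (s : ℝ → ℝ × (ι → ℝ)) : Prop where
  hasDerivWithinAt : ∀ t ∈ Ici (0 : ℝ), HasDerivWithinAt s (polarField A b α β (s t)) (Ici 0) t
  mem : ∀ t ∈ Ici (0 : ℝ), s t ∈ Ici (0 : ℝ) ×ˢ stdSimplex ℝ ι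

/-- The Lyapunov function attached to a nonnegative solution `z` of `Az = b`: the cross-entropy of
`z` and `p`, plus the squared defect between `q` and the total mass of `z`. -/
def polarLyapunov (α β : ℝ) (z : ι → ℝ) (s : ℝ × (ι → ℝ)) : ℝ :=
  (∑ n, z n * -Real.log (s.2 n)) / β + (s.1 - ∑ n, z n) ^ 2 / (2 * α)

variable {A : Matrix κ ι ℝ} {b : κ → ℝ} {α β : ℝ} {z : ι → ℝ} {s : ℝ → ℝ × (ι → ℝ)}

theorem sub_dotProduct_lsqGrad (hz : A *ᵥ z = b) (y : ι → ℝ) :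
    (y - z) ⬝ᵥ lsqGrad A b y = sqResidual A b y := by
  rw [lsqGrad, Matrix.dotProduct_mulVec, Matrix.vecMul_transpose, Matrix.mulVec_sub, hz, sqResidual]

theorem sqResidual_nonneg (A : Matrix κ ι ℝ) (b : κ → ℝ) (y : ι → ℝ) : 0 ≤ sqResidual A b y :=
  Finset.sum_nonneg fun _ _ => mul_self_nonneg _

theorem sqResidual_eq_zero_iff {y : ι → ℝ} : sqResidual A b y = 0 ↔ A *ᵥ y = b := by
  rw [sqResidual, dotProduct_self_eq_zero, sub_eq_zero]

theorem continuous_lsqGrad (A : Matrix κ ι ℝ) (b : κ → ℝ) : Continuous (lsqGrad A b) :=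
  continuous_const.matrix_mulVec ((continuous_const.matrix_mulVec continuous_id).sub
    continuous_const)

theorem continuous_lsqGrad_smul (A : Matrix κ ι ℝ) (b : κ → ℝ) :
    Continuous fun s : ℝ × (ι → ℝ) => lsqGrad A b (s.1 • s.2) :=
  (continuous_lsqGrad A b).comp (continuous_fst.smul continuous_snd)

theorem continuous_polarRate (A : Matrix κ ι ℝ) (b : κ → ℝ) (β : ℝ) (n : ι) :
    Continuous (polarRate A b β n) :=
  ((continuous_const.mul continuous_fst).mul
    (((continuous_apply n).comp (continuous_lsqGrad_smul A b)).sub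
      (continuous_snd.dotProduct (continuous_lsqGrad_smul A b)))).neg

theorem continuous_polarField (A : Matrix κ ι ℝ) (b : κ → ℝ) (α β : ℝ) :
    Continuous (polarField A b α β) :=
  ((continuous_const.mul continuous_fst).mul
    (continuous_snd.dotProduct (continuous_lsqGrad_smul A b))).neg.prodMk
      (continuous_pi fun n =>
        (continuous_polarRate A b β n).mul ((continuous_apply n).comp continuous_snd))

theorem continuous_mul_sqResidual (A : Matrix κ ι ℝ) (b : κ → ℝ) :
    Continuous fun s : ℝ × (ι → ℝ) => s.1 * sqResidual A b (s.1 • s.2) := by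
  have hres : Continuous fun s : ℝ × (ι → ℝ) => A *ᵥ (s.1 • s.2) - b :=
    (continuous_const.matrix_mulVec (continuous_fst.smul continuous_snd)).sub continuous_const
  exact continuous_fst.mul (hres.dotProduct hres)

theorem continuousAt_polarLyapunov {x : ℝ × (ι → ℝ)} (hz : ∀ n, x.2 n = 0 → z n = 0) :
    ContinuousAt (polarLyapunov α β z) x := by
  have hterm : ∀ n, ContinuousAt (fun y : ℝ × (ι → ℝ) => z n * -Real.log (y.2 n)) x := by
    intro n
    by_cases hx : x.2 n = 0
    · simpa only [hz n hx, zero_mul] using continuousAt_const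
    · have hn : ContinuousAt (fun y : ℝ × (ι → ℝ) => y.2 n) x := by fun_prop
      exact continuousAt_const.mul (hn.log hx).neg
  unfold polarLyapunov
  fun_prop

theorem sq_div_le_polarLyapunov (hβ : 0 ≤ β) (hz : ∀ n, 0 ≤ z n) {x : ℝ × (ι → ℝ)}
    (hx : x.2 ∈ stdSimplex ℝ ι) : (x.1 - ∑ n, z n) ^ 2 / (2 * α) ≤ polarLyapunov α β z x := by
  refine le_add_of_nonneg_left (div_nonneg (Finset.sum_nonneg fun n _ => ?_) hβ)
  exact mul_nonneg (hz n)
    (neg_nonneg.2 (Real.log_nonpos (hx.1 n) (mem_Icc_of_mem_stdSimplex hx n).2))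

theorem le_polarLyapunov_sub (hβ : 0 ≤ β) {ρ : ℝ} (hρ : 0 ≤ ρ) {w : ι → ℝ}
    (hw : w ∈ stdSimplex ℝ ι) {x : ℝ × (ι → ℝ)} (hx : x.2 ∈ stdSimplex ℝ ι)
    (hpos : ∀ n, 0 < x.2 n) :
    ρ / β * ∑ n, (√(x.2 n) - √(w n)) ^ 2 + (x.1 - ρ) ^ 2 / (2 * α) ≤
      polarLyapunov α β (ρ • w) x - polarLyapunov α β (ρ • w) (ρ, w) := by
  have hmass : ∑ n, (ρ • w) n = ρ := by
    simp only [Pi.smul_apply, smul_eq_mul, ← Finset.mul_sum, hw.2, mul_one]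
  have hKL : polarLyapunov α β (ρ • w) x - polarLyapunov α β (ρ • w) (ρ, w) =
      ρ / β * ∑ n, w n * (Real.log (w n) - Real.log (x.2 n)) + (x.1 - ρ) ^ 2 / (2 * α) := by
    have hsum : ∀ p : ι → ℝ,
        ∑ n, (ρ • w) n * -Real.log (p n) = -(ρ * ∑ n, w n * Real.log (p n)) := fun p => by
      simp only [Pi.smul_apply, smul_eq_mul, mul_neg, mul_assoc, Finset.mul_sum,
        Finset.sum_neg_distrib]
    simp only [polarLyapunov, hmass, hsum, mul_sub, Finset.sum_sub_distrib]
    ring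
  rw [hKL]
  simp only [fun n => sub_sq_comm √(x.2 n) √(w n)]
  have := sum_sq_sqrt_sub_sqrt_le hw hx hpos
  gcongr

theorem tendsto_of_tendsto_polarLyapunov (hα : 0 < α) (hβ : 0 < β) {ρ : ℝ} (hρ : 0 < ρ)
    {w : ι → ℝ} (hw : w ∈ stdSimplex ℝ ι) {X : Type*} {l : Filter X} {s : X → ℝ × (ι → ℝ)}
    (hs : ∀ᶠ x in l, (s x).2 ∈ stdSimplex ℝ ι ∧ ∀ n, 0 < (s x).2 n)
    (hV : Tendsto (fun x => polarLyapunov α β (ρ • w) (s x)) l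
      (𝓝 (polarLyapunov α β (ρ • w) (ρ, w)))) :
    Tendsto s l (𝓝 (ρ, w)) := by
  have hgap : Tendsto (fun x => polarLyapunov α β (ρ • w) (s x) -
      polarLyapunov α β (ρ • w) (ρ, w)) l (𝓝 0) := by
    simpa only [sub_self] using hV.sub_const (polarLyapunov α β (ρ • w) (ρ, w))
  have hbound := hs.mono fun x hx => le_polarLyapunov_sub (α := α) hβ.le hρ.le hw hx.1 hx.2
  have hq : Tendsto (fun x => (s x).1) l (𝓝 ρ) := by
    refine tendsto_of_sq_sub_le (hbound.mono fun x hx => ?_)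
      (by simpa only [zero_mul] using hgap.mul_const (2 * α))
    rw [← div_le_iff₀ (by positivity)]
    exact (le_add_of_nonneg_left (by positivity)).trans hx
  have hsqrt : ∀ n, Tendsto (fun x => √((s x).2 n)) l (𝓝 √(w n)) := by
    refine fun n => tendsto_of_sq_sub_le (hbound.mono fun x hx => ?_)
      (by simpa only [zero_div] using hgap.div_const (ρ / β))
    rw [le_div_iff₀' (by positivity)]
    calc ρ / β * (√((s x).2 n) - √(w n)) ^ 2
        ≤ ρ / β * ∑ n, (√((s x).2 n) - √(w n)) ^ 2 := by
          gcongr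
          exact Finset.single_le_sum (f := fun n => (√((s x).2 n) - √(w n)) ^ 2)
            (fun _ _ => sq_nonneg _) (Finset.mem_univ n)
      _ ≤ _ := (le_add_of_nonneg_right (by positivity)).trans hx
  have hp : Tendsto (fun x => (s x).2) l (𝓝 w) := by
    refine tendsto_pi_nhds.2 fun n => ?_
    have hsq := (hsqrt n).pow 2
    rw [Real.sq_sqrt (hw.1 n)] at hsq
    exact hsq.congr' (hs.mono fun x hx => Real.sq_sqrt (hx.1.1 n))
  exact hq.prodMk_nhds hp

namespace IsPolarFlow

theorem continuousOn (hs : IsPolarFlow A b α β s) : ContinuousOn s (Ici 0) := fun t ht =>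
  (hs.hasDerivWithinAt t ht).continuousWithinAt

theorem pos (hs : IsPolarFlow A b α β s) (h0 : ∀ n, (s 0).2 n ≠ 0) {t : ℝ} (ht : t ∈ Ici 0)
    (n : ι) : 0 < (s t).2 n := by
  refine ((hs.mem t ht).2.1 n).lt_of_ne' ?_
  exact ne_zero_of_hasDerivWithinAt_smul (y := fun t => (s t).2 n)
    ((continuous_polarRate A b β n).comp_continuousOn hs.continuousOn)
    (fun τ hτ => hasDerivWithinAt_pi.1 (hs.hasDerivWithinAt τ hτ).snd n) (h0 n) ht

theorem hasDerivWithinAt_polarLyapunov (hs : IsPolarFlow A b α β s) (hα : α ≠ 0) (hβ : β ≠ 0)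
    (h0 : ∀ n, (s 0).2 n ≠ 0) (hz : A *ᵥ z = b) {t : ℝ} (ht : t ∈ Ici 0) :
    HasDerivWithinAt (fun τ => polarLyapunov α β z (s τ))
      (-((s t).1 * sqResidual A b ((s t).1 • (s t).2))) (Ici 0) t := by
  set g := lsqGrad A b ((s t).1 • (s t).2) with hg
  have hq : HasDerivWithinAt (fun τ => (s τ).1) (-(α * (s t).1 * ((s t).2 ⬝ᵥ g))) (Ici 0) t :=
    (hs.hasDerivWithinAt t ht).fst
  have hlog : ∀ n, HasDerivWithinAt (fun τ => Real.log ((s τ).2 n))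
      (-(β * (s t).1 * (g n - (s t).2 ⬝ᵥ g))) (Ici 0) t := fun n => by
    have hpn := hasDerivWithinAt_pi.1 (hs.hasDerivWithinAt t ht).snd n
    exact (hpn.log (hs.pos h0 ht n).ne').congr_deriv
      (mul_div_cancel_right₀ _ (hs.pos h0 ht n).ne')
  have hentropy := (HasDerivWithinAt.fun_sum fun n (_ : n ∈ Finset.univ) =>
    (hlog n).neg.const_mul (z n)).div_const β
  have hdefect := ((hq.sub_const (∑ n, z n)).pow 2).div_const (2 * α)
  refine (hentropy.add hdefect).congr_deriv ?_
  have hsum : ∑ n, z n * -(-(β * (s t).1 * (g n - (s t).2 ⬝ᵥ g))) =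
      β * (s t).1 * (z ⬝ᵥ g - (∑ n, z n) * ((s t).2 ⬝ᵥ g)) := by
    rw [show z ⬝ᵥ g = ∑ n, z n * g n from rfl, Finset.sum_mul, ← Finset.sum_sub_distrib,
      Finset.mul_sum]
    exact Finset.sum_congr rfl fun n _ => by ring
  rw [hsum, ← sub_dotProduct_lsqGrad hz, sub_dotProduct, smul_dotProduct, ← hg, smul_eq_mul]
  field_simp
  ring

theorem antitoneOn_polarLyapunov (hs : IsPolarFlow A b α β s) (hα : α ≠ 0) (hβ : β ≠ 0)
    (h0 : ∀ n, (s 0).2 n ≠ 0) (hz : A *ᵥ z = b) :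
    AntitoneOn (fun t => polarLyapunov α β z (s t)) (Ici 0) := by
  have hV := fun t ht => hs.hasDerivWithinAt_polarLyapunov hα hβ h0 hz (t := t) ht
  refine antitoneOn_of_hasDerivWithinAt_nonpos (convex_Ici 0)
    (fun t ht => (hV t ht).continuousWithinAt)
    (fun t ht => (hV t (interior_subset ht)).mono interior_subset) fun t ht => ?_
  exact neg_nonpos.2 (mul_nonneg (hs.mem t (interior_subset ht)).1 (sqResidual_nonneg A b _))

theorem exists_tendsto_polarLyapunov (hs : IsPolarFlow A b α β s) (hα : 0 < α) (hβ : 0 < β)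
    (h0 : ∀ n, (s 0).2 n ≠ 0) (hz : ∀ n, 0 ≤ z n) (hAz : A *ᵥ z = b) :
    ∃ l, Tendsto (fun t => polarLyapunov α β z (s t)) atTop (𝓝 l) := by
  refine exists_tendsto_atTop_of_antitoneOn_Ici
    (hs.antitoneOn_polarLyapunov hα.ne' hβ.ne' h0 hAz) (c := 0) fun t ht => ?_
  exact le_trans (by positivity) (sq_div_le_polarLyapunov hβ.le hz (hs.mem t ht).2)

theorem exists_mapsTo_Icc_prod_stdSimplex (hs : IsPolarFlow A b α β s) (hα : 0 < α) (hβ : 0 < β)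
    (h0 : ∀ n, (s 0).2 n ≠ 0) (hz : ∀ n, 0 ≤ z n) (hAz : A *ᵥ z = b) :
    ∃ R, MapsTo s (Ici 0) (Icc 0 R ×ˢ stdSimplex ℝ ι) := by
  refine ⟨∑ n, z n + √(2 * α * polarLyapunov α β z (s 0)), fun t ht =>
    ⟨⟨(hs.mem t ht).1, ?_⟩, (hs.mem t ht).2⟩⟩
  rw [← sub_le_iff_le_add']
  refine Real.le_sqrt_of_sq_le ?_
  rw [← div_le_iff₀' (by positivity)]
  exact (sq_div_le_polarLyapunov hβ.le hz (hs.mem t ht).2).trans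
    (hs.antitoneOn_polarLyapunov hα.ne' hβ.ne' h0 hAz self_mem_Ici ht ht)

theorem tendsto_mul_sqResidual (hs : IsPolarFlow A b α β s) (hα : 0 < α) (hβ : 0 < β)
    (h0 : ∀ n, (s 0).2 n ≠ 0) (hz : ∀ n, 0 ≤ z n) (hAz : A *ᵥ z = b) :
    Tendsto (fun t => (s t).1 * sqResidual A b ((s t).1 • (s t).2)) atTop (𝓝 0) := by
  obtain ⟨R, hR⟩ := hs.exists_mapsTo_Icc_prod_stdSimplex hα hβ h0 hz hAz
  obtain ⟨l, hl⟩ := hs.exists_tendsto_polarLyapunov hα hβ h0 hz hAz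
  simpa only [Pi.neg_apply, neg_neg, neg_zero] using (tendsto_zero_of_compact_trajectory
    (isCompact_Icc.prod (isCompact_stdSimplex ℝ ι)) (continuous_polarField A b α β).continuousOn
    (continuous_mul_sqResidual A b).neg.continuousOn hR hs.hasDerivWithinAt
    (fun t ht => hs.hasDerivWithinAt_polarLyapunov hα.ne' hβ.ne' h0 hAz ht) hl).neg

theorem exists_mapClusterPt (hs : IsPolarFlow A b α β s) (hα : 0 < α) (hβ : 0 < β)
    (h0 : ∀ n, (s 0).2 n ≠ 0) (hz : ∀ n, 0 ≤ z n) (hAz : A *ᵥ z = b)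
    (hq : ¬ Tendsto (fun t => (s t).1) atTop (𝓝 0)) :
    ∃ ρ > 0, ∃ w ∈ stdSimplex ℝ ι, A *ᵥ (ρ • w) = b ∧ MapClusterPt (ρ, w) atTop s := by
  obtain ⟨R, hR⟩ := hs.exists_mapsTo_Icc_prod_stdSimplex hα hβ h0 hz hAz
  obtain ⟨ε, hε, hfreq⟩ : ∃ ε > 0, ∃ᶠ t in atTop, ε ≤ (s t).1 := by
    simp only [Metric.tendsto_nhds, not_forall, not_eventually, not_lt] at hq
    obtain ⟨ε, hε, hfreq⟩ := hq
    refine ⟨ε, hε, (hfreq.and_eventually (eventually_ge_atTop 0)).mono fun t ht => ?_⟩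
    have hqt : 0 ≤ (s t).1 := (hs.mem t ht.2).1
    simpa only [Real.dist_0_eq_abs, abs_of_nonneg hqt] using ht.1
  obtain ⟨⟨ρ, w⟩, hK, hcluster⟩ :=
    (isCompact_Icc.prod (isCompact_stdSimplex ℝ ι)).exists_mapClusterPt_of_frequently
      ((hfreq.and_eventually (eventually_ge_atTop 0)).mono fun t ht =>
        (⟨⟨ht.1, (hR ht.2).1.2⟩, (hR ht.2).2⟩ : s t ∈ Icc ε R ×ˢ stdSimplex ℝ ι))
  have hρ : 0 < ρ := hε.trans_le hK.1.1
  have hzero : ρ * sqResidual A b (ρ • w) = 0 :=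
    eq_of_mapClusterPt_of_tendsto_comp (φ := fun x => x.1 * sqResidual A b (x.1 • x.2)) hcluster
      (continuous_mul_sqResidual A b).continuousAt
      (hs.tendsto_mul_sqResidual hα hβ h0 hz hAz)
  exact ⟨ρ, hρ, w, hK.2, sqResidual_eq_zero_iff.1 ((mul_eq_zero_iff_left hρ.ne').1 hzero), hcluster⟩

theorem exists_tendsto_smul (hs : IsPolarFlow A b α β s) (hα : 0 < α) (hβ : 0 < β)
    (h0 : ∀ n, (s 0).2 n ≠ 0) (hz : ∀ n, 0 ≤ z n) (hAz : A *ᵥ z = b) :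
    ∃ y, Tendsto (fun t => (s t).1 • (s t).2) atTop (𝓝 y) := by
  by_cases hq : Tendsto (fun t => (s t).1) atTop (𝓝 0)
  · refine ⟨0, hq.zero_smul_isBoundedUnder_le (isBoundedUnder_of_eventually_le (a := 1) ?_)⟩
    filter_upwards [eventually_ge_atTop 0] with t ht
    exact mem_closedBall_zero_iff.1 (stdSimplex_subset_closedBall (hs.mem t ht).2)
  · obtain ⟨ρ, hρ, w, hw, hAw, hcluster⟩ := hs.exists_mapClusterPt hα hβ h0 hz hAz hq
    have hρw : ∀ n, 0 ≤ (ρ • w) n := fun n => mul_nonneg hρ.le (hw.1 n)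
    obtain ⟨l, hl⟩ := hs.exists_tendsto_polarLyapunov hα hβ h0 hρw hAw
    have hVl : polarLyapunov α β (ρ • w) (ρ, w) = l := eq_of_mapClusterPt_of_tendsto_comp hcluster
      (continuousAt_polarLyapunov fun n (hn : w n = 0) => by
        rw [Pi.smul_apply, hn, smul_zero]) hl
    have hlim : Tendsto s atTop (𝓝 (ρ, w)) := by
      refine tendsto_of_tendsto_polarLyapunov hα hβ hρ hw ?_ (hVl ▸ hl)
      filter_upwards [eventually_ge_atTop 0] with t ht
      exact ⟨(hs.mem t ht).2, hs.pos h0 ht⟩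
    exact ⟨ρ • w, hlim.fst_nhds.smul hlim.snd_nhds⟩

end IsPolarFlow

end PolarFlow

section WeightNormalization

open Set
open scoped Matrix

theorem eucNorm_sq (u : Fin N → ℝ) : eucNorm u ^ 2 = ∑ n, u n ^ 2 :=
  Real.sq_sqrt (Finset.sum_nonneg fun _ _ => sq_nonneg _)

theorem eucNorm_pos [Nonempty (Fin N)] {u : Fin N → ℝ} (hu : ∀ n, u n ≠ 0) : 0 < eucNorm u :=
  Real.sqrt_pos.2 (Finset.sum_pos (fun n _ => sq_pos_of_ne_zero (hu n)) Finset.univ_nonempty)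

/-- The polar coordinates `(r², u^{⊙2} / ‖u‖₂²)` of the weight-normalized vector `(r / ‖u‖₂) u`. -/
def sqPolar (r : ℝ) (u : Fin N → ℝ) : ℝ × (Fin N → ℝ) := (r ^ 2, fun n => u n ^ 2 / eucNorm u ^ 2)

theorem hadPow_normVec_two (r : ℝ) (u : Fin N → ℝ) :
    hadPow (normVec r u) 2 = (sqPolar r u).1 • (sqPolar r u).2 := by
  funext n
  simp only [hadPow, normVec, sqPolar, Pi.smul_apply, smul_eq_mul]
  ring

theorem sqPolar_mem {u : Fin N → ℝ} (hu : eucNorm u ≠ 0) (r : ℝ) :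
    sqPolar r u ∈ Ici (0 : ℝ) ×ˢ stdSimplex ℝ (Fin N) := by
  refine ⟨sq_nonneg r, fun n => by unfold sqPolar; positivity, ?_⟩
  rw [sqPolar, ← Finset.sum_div, ← eucNorm_sq, div_self (pow_ne_zero 2 hu)]

theorem sum_mul_gradU_eq_zero (A : Matrix (Fin M) (Fin N) ℝ) (b : Fin M → ℝ) (L : ℕ) (r : ℝ)
    (u : Fin N → ℝ) : ∑ n, u n * gradU A b L r u n = 0 := by
  by_cases hu : eucNorm u = 0
  · simp [gradU, hu]
  set g := gradLoss A b L (normVec r u) with hg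
  calc ∑ n, u n * gradU A b L r u n
      = r / eucNorm u * (∑ n, u n * g n - (∑ n, u n * g n) / eucNorm u ^ 2 * ∑ n, u n ^ 2) := by
        rw [Finset.mul_sum, ← Finset.sum_sub_distrib, Finset.mul_sum]
        exact Finset.sum_congr rfl fun n _ => by rw [gradU, ← hg]; ring
    _ = 0 := by
        rw [← eucNorm_sq, div_mul_cancel₀ _ (pow_ne_zero 2 hu), sub_self, mul_zero]

theorem gradLoss_two (A : Matrix (Fin M) (Fin N) ℝ) (b : Fin M → ℝ) (x : Fin N → ℝ) (n : Fin N) :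
    gradLoss A b 2 x n = lsqGrad A b (hadPow x 2) n * x n := by
  rw [gradLoss, lsqGrad, pow_one]

theorem gradR_two (A : Matrix (Fin M) (Fin N) ℝ) (b : Fin M → ℝ) (r : ℝ) (u : Fin N → ℝ) :
    gradR A b 2 r u =
      r * ((sqPolar r u).2 ⬝ᵥ lsqGrad A b ((sqPolar r u).1 • (sqPolar r u).2)) := by
  rw [dotProduct, Finset.mul_sum, ← hadPow_normVec_two]
  refine Finset.sum_congr rfl fun n _ => ?_
  simp only [gradLoss_two, normVec, sqPolar, Pi.smul_apply, smul_eq_mul]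
  ring

theorem gradU_two (A : Matrix (Fin M) (Fin N) ℝ) (b : Fin M → ℝ) (r : ℝ) (u : Fin N → ℝ)
    (n : Fin N) :
    gradU A b 2 r u n = (r / eucNorm u) ^ 2 * u n *
      (lsqGrad A b ((sqPolar r u).1 • (sqPolar r u).2) n -
        (sqPolar r u).2 ⬝ᵥ lsqGrad A b ((sqPolar r u).1 • (sqPolar r u).2)) := by
  set g := lsqGrad A b ((sqPolar r u).1 • (sqPolar r u).2) with hg
  have hgrad : ∀ k, gradLoss A b 2 (normVec r u) k = g k * (r / eucNorm u * u k) := fun k => by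
    rw [gradLoss_two, hadPow_normVec_two, ← hg, normVec, Pi.smul_apply, smul_eq_mul]
  have hradial : (∑ k, u k * gradLoss A b 2 (normVec r u) k) / eucNorm u ^ 2 =
      r / eucNorm u * ((sqPolar r u).2 ⬝ᵥ g) := by
    rw [dotProduct, Finset.mul_sum, Finset.sum_div]
    refine Finset.sum_congr rfl fun k _ => ?_
    rw [hgrad, sqPolar]
    ring
  rw [gradU, hradial, hgrad]
  ring

variable {A : Matrix (Fin M) (Fin N) ℝ} {b : Fin M → ℝ} {r : ℝ → ℝ} {u : ℝ → Fin N → ℝ}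

theorem WNFlow.eucNorm_eq {L : ℕ} {ηr ηu : ℝ → ℝ} (hflow : WNFlow A b L ηr ηu r u) {t : ℝ}
    (ht : 0 ≤ t) : eucNorm (u t) = eucNorm (u 0) := by
  have hderiv : ∀ τ, 0 ≤ τ → HasDerivAt (fun s => ∑ n, u s n ^ 2) 0 τ := fun τ hτ => by
    refine (HasDerivAt.fun_sum fun n _ => (hflow.2 τ hτ n).fun_pow 2).congr_deriv ?_
    calc ∑ n, ((2 : ℕ) : ℝ) * u τ n ^ (2 - 1) * -(ηu τ * gradU A b L (r τ) (u τ) n)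
        = -(2 * ηu τ) * ∑ n, u τ n * gradU A b L (r τ) (u τ) n := by
          rw [Finset.mul_sum]
          exact Finset.sum_congr rfl fun n _ => by push_cast; ring
      _ = 0 := by rw [sum_mul_gradU_eq_zero, mul_zero]
  have hconst : ∑ n, u t n ^ 2 = ∑ n, u 0 n ^ 2 :=
    constant_of_has_deriv_right_zero
      (fun τ hτ => (hderiv τ hτ.1).continuousAt.continuousWithinAt)
      (fun τ hτ => (hderiv τ hτ.1).hasDerivWithinAt) t ⟨ht, le_rfl⟩
  rw [eucNorm, hconst, eucNorm]

theorem WNFlow.isPolarFlow_sqPolar {ηr ηu : ℝ}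
    (hflow : WNFlow A b 2 (fun _ => ηr) (fun _ => ηu) r u) (hu0 : eucNorm (u 0) ≠ 0) :
    IsPolarFlow A b (2 * ηr) (2 * ηu / eucNorm (u 0) ^ 2) (fun t => sqPolar (r t) (u t)) where
  mem t ht := sqPolar_mem (hflow.eucNorm_eq ht ▸ hu0) (r t)
  hasDerivWithinAt t ht := by
    have hq := ((hflow.1 t ht).fun_pow 2).hasDerivWithinAt (s := Ici 0)
    have hp : ∀ n, HasDerivWithinAt (fun τ => u τ n ^ 2 / eucNorm (u τ) ^ 2)
        ((2 : ℕ) * u t n ^ (2 - 1) * -(ηu * gradU A b 2 (r t) (u t) n) / eucNorm (u 0) ^ 2)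
        (Ici 0) t := fun n =>
      ((((hflow.2 t ht n).fun_pow 2).div_const (eucNorm (u 0) ^ 2)).hasDerivWithinAt).congr_of_mem
        (fun τ hτ => by rw [hflow.eucNorm_eq hτ]) ht
    refine (hq.prodMk (hasDerivWithinAt_pi.2 hp)).congr_deriv (Prod.ext ?_ (funext fun n => ?_))
    · simp only [gradR_two, polarField, sqPolar]
      push_cast
      ring
    · simp only [gradU_two, polarField, polarRate, sqPolar, hflow.eucNorm_eq ht]
      push_cast
      ring

end WeightNormalization

theorem stmt3_general {M N : ℕ} (A : Matrix (Fin M) (Fin N) ℝ) (b : Fin M → ℝ) {ηr ηu : ℝ}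
    (hηr : 0 < ηr) (hηu : 0 < ηu) (r : ℝ → ℝ) (u : ℝ → Fin N → ℝ)
    (hflow : WNFlow A b 2 (fun _ => ηr) (fun _ => ηu) r u) (hu0 : ∀ n, u 0 n ≠ 0)
    (hS : (Splus A b).Nonempty) :
    ∃ xinf : Fin N → ℝ,
      Tendsto (fun t => hadPow (normVec (r t) (u t)) 2) atTop (𝓝 xinf) := by
  rcases isEmpty_or_nonempty (Fin N) with _ | _
  · exact ⟨0, tendsto_const_nhds.congr fun _ => Subsingleton.elim _ _⟩
  obtain ⟨z, hz, hAz⟩ := hS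
  have hnorm : 0 < eucNorm (u 0) := eucNorm_pos hu0
  have h0 : ∀ n, (sqPolar (r 0) (u 0)).2 n ≠ 0 := fun n =>
    div_ne_zero (pow_ne_zero 2 (hu0 n)) (pow_ne_zero 2 hnorm.ne')
  simp only [hadPow_normVec_two]
  exact (hflow.isPolarFlow_sqPolar hnorm.ne').exists_tendsto_smul (by positivity) (by positivity)
    h0 hz hAz

theorem stmt3 {M N : ℕ}
    (A : Matrix (Fin M) (Fin N) ℝ) (b : Fin M → ℝ)
    (Adag : Matrix (Fin N) (Fin M) ℝ) (hdag : IsMoorePenrose A Adag)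
    (η : ℝ) (hη : 0 < η)
    (r : ℝ → ℝ) (u : ℝ → Fin N → ℝ)
    (hflow : WNFlow A b 2 (fun _ => η) (fun _ => 1) r u)
    (hr0 : 0 < r 0) (hu0 : ∀ n, 0 < u 0 n) (hnorm : eucNorm (u 0) = 1)
    (hr0le : r 0 ≤ min (Real.sqrt η) (eucNorm (Adag.mulVec b) ^ ((1 : ℝ) / 2)))
    (v : Fin N → ℝ) (hv : ∀ n, 0 < v n) (hAv : A.mulVec v = 0)
    (hS : (Splus A b).Nonempty) :
    ∃ xinf : Fin N → ℝ,
      Tendsto (fun t => hadPow (normVec (r t) (u t)) 2) atTop (𝓝 xinf) := by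
  exact stmt3_general A b hη one_pos r u hflow (fun n => (hu0 n).ne') hS

end
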